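/- For every f ∈ L¹(γ_d) and almost every x ∈ ℝ^d, T_t f(y) → f(x) as (y,t) → (x,0) with (y,t) in the parabolic Gaussian cone Γ^p_γ(x) = {(y,t) ∈ ℝ^{d+1}_+ : |y−x| < t^{1/2} ∧ (1/|x|) ∧ 1}. -/

import Mathlib

open Real MeasureTheory Filter Topology

/-- The Gaussian measure `γ_d` on `ℝ^d`, with density `π^{-d/2} e^{-|x|²}`. -/
noncomputable def gaussianMeasure (d : ℕ) : Measure (EuclideanSpace ℝ (Fin d)) :=
  volume.withDensity fun x => ENNReal.ofReal (π ^ (-(d:ℝ)/2) * Real.exp (-‖x‖ ^ 2))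

/-- The Ornstein-Uhlenbeck (Mehler) semigroup. -/
noncomputable def ouSemigroup {d : ℕ} (t : ℝ) (f : EuclideanSpace ℝ (Fin d) → ℝ)
    (x : EuclideanSpace ℝ (Fin d)) : ℝ :=
  π ^ (-(d:ℝ)/2) * (1 - Real.exp (-2*t)) ^ (-(d:ℝ)/2) *
    ∫ y, Real.exp (-‖y - Real.exp (-t) • x‖ ^ 2 / (1 - Real.exp (-2*t))) * f y

/-- The parabolic gaussian cone `Γ^p_γ(x)`. -/
def parabolicCone {d : ℕ} (x : EuclideanSpace ℝ (Fin d)) :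
    Set ((EuclideanSpace ℝ (Fin d)) × ℝ) :=
  {p | 0 < p.2 ∧ ‖p.1 - x‖ < min (min (Real.sqrt p.2) (1 / ‖x‖)) 1}

/-!
With `s = 1 - e^{-2t}` and `w = e^{-t} y`, the Mehler integral `T_t f(y)` is the mean of `f` against
the Gauss-Weierstrass kernel of width `s` centred at `w`, and the change of variables
`(y, t) ↦ (w, s)` maps a parabolic region with vertex `(x, 0)` into another one. In such a region
the kernel of width `s` centred at `w` is bounded by a multiple of the kernel of width `2s` centred
at `x`, so it remains to show that the means of `‖f - f x‖` against kernels centred at `x` tend to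
`0` when `x` is a Lebesgue point. Near `x` this holds because the superlevel sets of these kernels
are balls centred at `x`; away from `x` the kernel is `o(1)` times the Gaussian weight for which `f`
is integrable.
-/

section LayerCake

variable {α : Type*} [MeasurableSpace α]

lemma lintegral_ofReal_mono_of_measure_setOf_lt_le {μ ν : Measure α} {k : α → ℝ} (hk0 : 0 ≤ k)
    (hk : Measurable k) (h : ∀ t > 0, ν {z | t < k z} ≤ μ {z | t < k z}) :
    ∫⁻ z, ENNReal.ofReal (k z) ∂ν ≤ ∫⁻ z, ENNReal.ofReal (k z) ∂μ := by
  rw [lintegral_eq_lintegral_meas_lt ν (ae_of_all _ hk0) hk.aemeasurable,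
    lintegral_eq_lintegral_meas_lt μ (ae_of_all _ hk0) hk.aemeasurable]
  exact setLIntegral_mono' measurableSet_Ioi h

-- For `t ≥ 1` both sides are empty, since `√` vanishes on nonpositive numbers.
lemma setOf_lt_exp_neg_dist_sq_div {X : Type*} [PseudoMetricSpace X] {s t : ℝ} (hs : 0 < s)
    (ht : 0 < t) (x : X) :
    {z | t < rexp (-dist z x ^ 2 / s)} = Metric.ball x √(-(log t * s)) := by
  ext z
  rw [Set.mem_ofPred_eq, Metric.mem_ball, Real.lt_sqrt dist_nonneg, ← Real.log_lt_iff_lt_exp ht,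
    lt_div_iff₀ hs, lt_neg]

lemma lintegral_exp_neg_dist_sq_div_mono {X : Type*} [PseudoMetricSpace X] [MeasurableSpace X]
    [OpensMeasurableSpace X] {μ ν : Measure X} {s : ℝ} (hs : 0 < s) {x : X}
    (h : ∀ r, ν (Metric.ball x r) ≤ μ (Metric.ball x r)) :
    ∫⁻ z, ENNReal.ofReal (rexp (-dist z x ^ 2 / s)) ∂ν ≤
      ∫⁻ z, ENNReal.ofReal (rexp (-dist z x ^ 2 / s)) ∂μ := by
  refine lintegral_ofReal_mono_of_measure_setOf_lt_le (fun z => (Real.exp_pos _).le)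
    (by fun_prop) fun t ht => ?_
  rw [setOf_lt_exp_neg_dist_sq_div hs ht]
  exact h _

end LayerCake

section Kernel

variable {V : Type*} [NormedAddCommGroup V]

lemma norm_sub_sq_le_two_mul (z w x : V) : ‖z - x‖ ^ 2 ≤ 2 * (‖z - w‖ ^ 2 + ‖w - x‖ ^ 2) :=
  calc ‖z - x‖ ^ 2 ≤ (‖z - w‖ + ‖w - x‖) ^ 2 := by
        gcongr
        exact norm_sub_le_norm_sub_add_norm_sub z w x
    _ ≤ 2 * (‖z - w‖ ^ 2 + ‖w - x‖ ^ 2) := add_sq_le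

variable [NormedSpace ℝ V]

/-- The Gauss-Weierstrass kernel of width `s` centred at `w`, that is, the heat kernel at time
`s / 4`. The kernel of `T_t` at the point `y` is the one of width `1 - e^{-2t}` centred at
`e^{-t} y`. -/
noncomputable def gaussianKernel (s : ℝ) (w z : V) : ℝ :=
  (π * s) ^ (-(Module.finrank ℝ V : ℝ) / 2) * rexp (-‖z - w‖ ^ 2 / s)

@[fun_prop]
lemma continuous_gaussianKernel (s : ℝ) (w : V) : Continuous (gaussianKernel s w) := by
  unfold gaussianKernel
  fun_prop

lemma gaussianKernel_nonneg {s : ℝ} (hs : 0 ≤ s) (w z : V) : 0 ≤ gaussianKernel s w z := by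
  unfold gaussianKernel
  positivity

lemma gaussianKernel_le_mul_exp_neg_mul {s b δ : ℝ} (hs : 0 < s) (hbs : b * s ≤ 1) (hδ : 0 ≤ δ)
    {x z : V} (hz : δ ≤ ‖z - x‖) :
    gaussianKernel s x z ≤ (π * s) ^ (-(Module.finrank ℝ V : ℝ) / 2) *
      rexp (-δ ^ 2 * (s⁻¹ - b)) * rexp (-b * ‖z - x‖ ^ 2) := by
  have hb : 0 ≤ s⁻¹ - b := by rwa [sub_nonneg, ← one_div, le_div_iff₀ hs]
  have hsq : δ ^ 2 ≤ ‖z - x‖ ^ 2 := by gcongr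
  rw [gaussianKernel, mul_assoc, ← Real.exp_add, div_eq_mul_inv _ s]
  gcongr
  linarith [mul_le_mul_of_nonneg_right hsq hb]

lemma gaussianKernel_le_mul_gaussianKernel_two_mul {s a : ℝ} (hs : 0 < s) {w x : V}
    (hw : ‖w - x‖ ≤ a * √s) (z : V) :
    gaussianKernel s w z ≤
      rexp (a ^ 2) * 2 ^ ((Module.finrank ℝ V : ℝ) / 2) * gaussianKernel (2 * s) x z := by
  have hwsq : ‖w - x‖ ^ 2 ≤ a ^ 2 * s := by
    calc ‖w - x‖ ^ 2 ≤ (a * √s) ^ 2 := by gcongr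
      _ = a ^ 2 * s := by rw [mul_pow, Real.sq_sqrt hs.le]
  have hexp : rexp (-‖z - w‖ ^ 2 / s) ≤ rexp (a ^ 2) * rexp (-‖z - x‖ ^ 2 / (2 * s)) := by
    rw [← Real.exp_add, Real.exp_le_exp, ← sub_nonneg]
    have : a ^ 2 + -‖z - x‖ ^ 2 / (2 * s) - -‖z - w‖ ^ 2 / s =
        (2 * (‖z - w‖ ^ 2 + a ^ 2 * s) - ‖z - x‖ ^ 2) / (2 * s) := by
      field_simp
      ring
    rw [this]
    have := norm_sub_sq_le_two_mul z w x
    exact div_nonneg (by linarith) (by positivity)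
  have hconst : (π * s) ^ (-(Module.finrank ℝ V : ℝ) / 2) =
      2 ^ ((Module.finrank ℝ V : ℝ) / 2) * (π * (2 * s)) ^ (-(Module.finrank ℝ V : ℝ) / 2) := by
    rw [mul_left_comm π, Real.mul_rpow two_pos.le (by positivity), ← mul_assoc,
      ← Real.rpow_add two_pos, neg_div, add_neg_cancel, Real.rpow_zero, one_mul]
  calc gaussianKernel s w z
      ≤ (π * s) ^ (-(Module.finrank ℝ V : ℝ) / 2) *
          (rexp (a ^ 2) * rexp (-‖z - x‖ ^ 2 / (2 * s))) := by
        unfold gaussianKernel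
        gcongr
    _ = _ := by
        rw [hconst, gaussianKernel]
        ring

end Kernel

section Tail

lemma tendsto_rpow_mul_exp_neg_mul_inv_sub_nhdsGT_zero (a b : ℝ) {δ : ℝ} (hδ : 0 < δ) :
    Tendsto (fun s => (π * s) ^ a * rexp (-δ * (s⁻¹ - b))) (𝓝[>] 0) (𝓝 0) := by
  have h := ((tendsto_rpow_mul_exp_neg_mul_atTop_nhds_zero (-a) δ hδ).comp
    tendsto_inv_nhdsGT_zero).const_mul (π ^ a * rexp (δ * b))
  rw [mul_zero] at h
  refine h.congr' ?_
  filter_upwards [self_mem_nhdsWithin] with s (hs : 0 < s)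
  have hexp : rexp (-δ * (s⁻¹ - b)) = rexp (δ * b) * rexp (-δ * s⁻¹) := by
    rw [← Real.exp_add]
    ring_nf
  rw [Function.comp_apply, Real.inv_rpow hs.le, Real.rpow_neg hs.le, inv_inv, hexp,
    Real.mul_rpow pi_pos.le hs.le]
  ring

lemma tendsto_setLIntegral_compl_ball_gaussianKernel {V : Type*} [NormedAddCommGroup V]
    [NormedSpace ℝ V] [MeasurableSpace V] [OpensMeasurableSpace V] {ν : Measure V} {x : V} {b δ : ℝ}
    (hδ : 0 < δ)
    (hν : ∫⁻ z, ENNReal.ofReal (rexp (-b * ‖z - x‖ ^ 2)) ∂ν ≠ ⊤) :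
    Tendsto (fun s => ∫⁻ z in (Metric.ball x δ)ᶜ, ENNReal.ofReal (gaussianKernel s x z) ∂ν)
      (𝓝[>] 0) (𝓝 0) := by
  have hlim := ENNReal.Tendsto.mul_const (ENNReal.tendsto_ofReal
    (tendsto_rpow_mul_exp_neg_mul_inv_sub_nhdsGT_zero (-(Module.finrank ℝ V : ℝ) / 2) b
      (pow_pos hδ 2))) (.inr hν)
  rw [ENNReal.ofReal_zero, zero_mul] at hlim
  have hsmall : ∀ᶠ s in 𝓝[>] (0 : ℝ), b * s < 1 := by
    have : Tendsto (fun s => b * s) (𝓝[>] 0) (𝓝 0) :=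
      ((continuous_const_mul b).tendsto' 0 0 (mul_zero b)).mono_left nhdsWithin_le_nhds
    exact this.eventually_lt_const one_pos
  refine tendsto_of_tendsto_of_tendsto_of_le_of_le' tendsto_const_nhds hlim
    (Eventually.of_forall fun _ => zero_le) ?_
  filter_upwards [self_mem_nhdsWithin, hsmall] with s (hs : 0 < s) hbs
  rw [← lintegral_const_mul' _ _ ENNReal.ofReal_ne_top]
  refine (setLIntegral_mono' measurableSet_ball.compl fun z hz => ?_).trans
    (setLIntegral_le_lintegral _ _)
  rw [← ENNReal.ofReal_mul (by positivity)]
  have hz : δ ≤ ‖z - x‖ := by simpa [dist_eq_norm] using hz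
  exact ENNReal.ofReal_le_ofReal (gaussianKernel_le_mul_exp_neg_mul hs hbs.le hδ.le hz)

end Tail

section KernelIntegral

variable {V : Type*} [NormedAddCommGroup V] [InnerProductSpace ℝ V] [FiniteDimensional ℝ V]
  [MeasurableSpace V] [BorelSpace V]

lemma integral_gaussianKernel {s : ℝ} (hs : 0 < s) (w : V) : ∫ z, gaussianKernel s w z = 1 := by
  have hgauss : ∫ z : V, rexp (-‖z - w‖ ^ 2 / s) = (π * s) ^ (Module.finrank ℝ V / 2 : ℝ) := by
    rw [integral_sub_right_eq_self (fun z : V => rexp (-‖z‖ ^ 2 / s)) w]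
    simpa [div_eq_inv_mul, mul_comm π] using
      GaussianFourier.integral_rexp_neg_mul_sq_norm (V := V) (inv_pos.2 hs)
  simp only [gaussianKernel]
  rw [integral_const_mul, hgauss, neg_div, Real.rpow_neg (by positivity),
    inv_mul_cancel₀ (by positivity)]

lemma integrable_gaussianKernel {s : ℝ} (hs : 0 < s) (w : V) :
    Integrable (gaussianKernel s w) :=
  .of_integral_ne_zero (by rw [integral_gaussianKernel hs]; exact one_ne_zero)

lemma lintegral_gaussianKernel {s : ℝ} (hs : 0 < s) (w : V) :
    ∫⁻ z, ENNReal.ofReal (gaussianKernel s w z) = 1 := by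
  rw [← ofReal_integral_eq_lintegral_ofReal (integrable_gaussianKernel hs w)
    (ae_of_all _ (gaussianKernel_nonneg hs.le w)), integral_gaussianKernel hs, ENNReal.ofReal_one]

lemma integrable_exp_neg_mul_norm_sub_sq {b : ℝ} (hb : 0 < b) (x : V) :
    Integrable fun z : V => rexp (-b * ‖z - x‖ ^ 2) := by
  refine ((integrable_gaussianKernel (inv_pos.2 hb) x).const_mul
    ((π * b⁻¹) ^ (-(Module.finrank ℝ V : ℝ) / 2))⁻¹).congr (ae_of_all _ fun z => ?_)
  dsimp only [gaussianKernel]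
  rw [inv_mul_cancel_left₀ (by positivity), div_inv_eq_mul, neg_mul, neg_mul, mul_comm b]

end KernelIntegral

section RadialConvergence

variable {V : Type*} [NormedAddCommGroup V] [InnerProductSpace ℝ V] [FiniteDimensional ℝ V]
  [MeasurableSpace V] [BorelSpace V] {ν : Measure V} {x : V}

lemma lintegral_gaussianKernel_le_of_measure_ball_le {s : ℝ} (hs : 0 < s) {ε : ENNReal}
    (h : ∀ r, ν (Metric.ball x r) ≤ ε * volume (Metric.ball x r)) :
    ∫⁻ z, ENNReal.ofReal (gaussianKernel s x z) ∂ν ≤ ε := by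
  have hc : 0 ≤ (π * s) ^ (-(Module.finrank ℝ V : ℝ) / 2) := by positivity
  have hmono := lintegral_exp_neg_dist_sq_div_mono (μ := ε • volume) hs h
  simp only [dist_eq_norm] at hmono
  calc ∫⁻ z, ENNReal.ofReal (gaussianKernel s x z) ∂ν
      ≤ ∫⁻ z, ENNReal.ofReal (gaussianKernel s x z) ∂(ε • volume) := by
        simp only [gaussianKernel, ENNReal.ofReal_mul hc]
        rw [lintegral_const_mul' _ _ ENNReal.ofReal_ne_top,
          lintegral_const_mul' _ _ ENNReal.ofReal_ne_top]
        gcongr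
    _ = ε := by rw [lintegral_smul_measure, lintegral_gaussianKernel hs, smul_eq_mul, mul_one]

lemma setLIntegral_ball_gaussianKernel_le {s δ : ℝ} (hs : 0 < s) {ε : ENNReal}
    (h : ∀ r ≤ δ, ν (Metric.ball x r) ≤ ε * volume (Metric.ball x r)) :
    ∫⁻ z in Metric.ball x δ, ENNReal.ofReal (gaussianKernel s x z) ∂ν ≤ ε := by
  refine lintegral_gaussianKernel_le_of_measure_ball_le hs fun r => ?_
  rw [Measure.restrict_apply measurableSet_ball]
  calc ν (Metric.ball x r ∩ Metric.ball x δ)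
      ≤ ν (Metric.ball x (min r δ)) := measure_mono fun z hz => Metric.mem_ball.2 (lt_min hz.1 hz.2)
    _ ≤ ε * volume (Metric.ball x (min r δ)) := h _ (min_le_right r δ)
    _ ≤ ε * volume (Metric.ball x r) := by
        gcongr
        exact min_le_left r δ

lemma exists_measure_ball_le_of_tendsto_div
    (h : Tendsto (fun r => ν (Metric.closedBall x r) / volume (Metric.closedBall x r))
      (𝓝[>] 0) (𝓝 0)) {ε : ENNReal} (hε : 0 < ε) :
    ∃ δ > 0, ∀ r ≤ δ, ν (Metric.ball x r) ≤ ε * volume (Metric.ball x r) := by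
  obtain ⟨δ, hδ, hsub⟩ := mem_nhdsGT_iff_exists_Ioc_subset.1 (h.eventually_lt_const hε)
  refine ⟨δ, hδ, fun r hrδ => ?_⟩
  rcases le_or_gt r 0 with hr | hr
  · simp [Metric.ball_eq_empty.2 hr]
  · have hdiv : ν (Metric.closedBall x r) / volume (Metric.closedBall x r) < ε := hsub ⟨hr, hrδ⟩
    calc ν (Metric.ball x r) ≤ ν (Metric.closedBall x r) :=
          measure_mono Metric.ball_subset_closedBall
      _ ≤ ε * volume (Metric.closedBall x r) :=
          (ENNReal.div_le_iff (Metric.measure_closedBall_pos _ x hr).ne'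
            measure_closedBall_lt_top.ne).1 hdiv.le
      _ = ε * volume (Metric.ball x r) := by
          rw [Measure.addHaar_closedBall _ x hr.le, Measure.addHaar_ball_of_pos _ x hr]

theorem tendsto_lintegral_gaussianKernel_nhds_zero {b : ℝ}
    (hν : ∫⁻ z, ENNReal.ofReal (rexp (-b * ‖z - x‖ ^ 2)) ∂ν ≠ ⊤)
    (h : Tendsto (fun r => ν (Metric.closedBall x r) / volume (Metric.closedBall x r))
      (𝓝[>] 0) (𝓝 0)) :
    Tendsto (fun s => ∫⁻ z, ENNReal.ofReal (gaussianKernel s x z) ∂ν) (𝓝[>] 0) (𝓝 0) := by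
  refine ENNReal.tendsto_nhds_zero.2 fun ε hε => ?_
  obtain ⟨δ, hδ, hball⟩ := exists_measure_ball_le_of_tendsto_div h (ENNReal.half_pos hε.ne')
  have hfar := ENNReal.tendsto_nhds_zero.1
    (tendsto_setLIntegral_compl_ball_gaussianKernel hδ hν) _ (ENNReal.half_pos hε.ne')
  filter_upwards [hfar, self_mem_nhdsWithin] with s hs_far hs
  rw [← lintegral_add_compl _ (measurableSet_ball (x := x) (ε := δ)),
    ← ENNReal.add_halves ε]
  exact add_le_add (setLIntegral_ball_gaussianKernel_le hs hball) hs_far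

end RadialConvergence

section Approach

/-- The filter of approach to `(x, 0)` within the parabolic region `‖y - x‖ ≤ a √t`, `t > 0`,
of aperture `a`. -/
def parabolicNhds {V : Type*} [NormedAddCommGroup V] (a : ℝ) (x : V) : Filter (V × ℝ) :=
  𝓝 (x, 0) ⊓ 𝓟 {p | 0 < p.2 ∧ ‖p.1 - x‖ ≤ a * √p.2}

variable {V : Type*} [NormedAddCommGroup V] {a : ℝ} {x : V}

lemma eventually_parabolicNhds :
    ∀ᶠ p in parabolicNhds a x, 0 < p.2 ∧ ‖p.1 - x‖ ≤ a * √p.2 :=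
  mem_inf_of_right (mem_principal_self _)

lemma tendsto_snd_parabolicNhds : Tendsto Prod.snd (parabolicNhds a x) (𝓝[>] 0) :=
  tendsto_nhdsWithin_iff.2 ⟨(continuous_snd.tendsto (x, (0 : ℝ))).mono_left inf_le_left,
    eventually_parabolicNhds.mono fun _ hp => hp.1⟩

lemma le_one_sub_exp_neg_two_mul {t : ℝ} (ht0 : 0 ≤ t) (ht : t ≤ 1 / 2) :
    t ≤ 1 - rexp (-2 * t) := by
  have hexp : 2 * t + 1 ≤ rexp (2 * t) := Real.add_one_le_exp _
  have hinv : rexp (-2 * t) * rexp (2 * t) = 1 := by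
    rw [← Real.exp_add, neg_mul, neg_add_cancel, Real.exp_zero]
  nlinarith [Real.exp_pos (-2 * t)]

variable [NormedSpace ℝ V]

lemma norm_exp_neg_smul_sub_le {y : V} {t : ℝ} (ht0 : 0 ≤ t) :
    ‖rexp (-t) • y - x‖ ≤ ‖y - x‖ + t * ‖x‖ := by
  have hle : rexp (-t) ≤ 1 := Real.exp_le_one_iff.2 (neg_nonpos.2 ht0)
  calc ‖rexp (-t) • y - x‖ = ‖rexp (-t) • (y - x) - (1 - rexp (-t)) • x‖ := by
        congr 1
        module
    _ ≤ ‖rexp (-t) • (y - x)‖ + ‖(1 - rexp (-t)) • x‖ := norm_sub_le _ _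
    _ = rexp (-t) * ‖y - x‖ + (1 - rexp (-t)) * ‖x‖ := by
        rw [norm_smul, norm_smul, Real.norm_of_nonneg (Real.exp_pos _).le,
          Real.norm_of_nonneg (sub_nonneg.2 hle)]
    _ ≤ ‖y - x‖ + t * ‖x‖ := by
        gcongr
        · exact mul_le_of_le_one_left (norm_nonneg _) hle
        · linarith [Real.one_sub_le_exp_neg t]

lemma tendsto_exp_neg_smul_parabolicNhds :
    Tendsto (fun p : V × ℝ => (rexp (-p.2) • p.1, 1 - rexp (-2 * p.2)))
      (parabolicNhds a x) (parabolicNhds (a + ‖x‖) x) := by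
  refine tendsto_inf.2 ⟨?_, tendsto_principal.2 ?_⟩
  · exact (Continuous.tendsto' (by fun_prop) _ _ (by simp)).mono_left inf_le_left
  have hsmall : ∀ᶠ p in parabolicNhds a x, p.2 ≤ 1 / 2 :=
    (tendsto_snd_parabolicNhds.mono_right nhdsWithin_le_nhds).eventually_le_const
      (by norm_num)
  filter_upwards [eventually_parabolicNhds, hsmall] with ⟨y, t⟩ ⟨ht, hy⟩ ht'
  dsimp only at ht hy ht' ⊢
  have ha : 0 ≤ a :=
    nonneg_of_mul_nonneg_left ((norm_nonneg _).trans hy) (Real.sqrt_pos.2 ht)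
  have htt : t ≤ √t := Real.le_sqrt_of_sq_le (by nlinarith)
  refine ⟨sub_pos.2 (Real.exp_lt_one_iff.2 (by linarith)), ?_⟩
  calc ‖rexp (-t) • y - x‖ ≤ ‖y - x‖ + t * ‖x‖ := norm_exp_neg_smul_sub_le ht.le
    _ ≤ a * √t + √t * ‖x‖ := by gcongr
    _ = (a + ‖x‖) * √t := by ring
    _ ≤ (a + ‖x‖) * √(1 - rexp (-2 * t)) := by
        gcongr
        exact le_one_sub_exp_neg_two_mul ht.le ht'

end Approach

section LebesguePoint

variable {V E : Type*} [NormedAddCommGroup V] [MeasurableSpace V] [NormedAddCommGroup E]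

/-- `x` is a Lebesgue point of `f`: the mean oscillation of `f` about the value `f x` over the
closed balls centred at `x` tends to `0` with the radius. -/
def IsLebesguePoint (μ : Measure V) (f : V → E) (x : V) : Prop :=
  Tendsto (fun r => (∫⁻ z in Metric.closedBall x r, ‖f z - f x‖ₑ ∂μ) / μ (Metric.closedBall x r))
    (𝓝[>] 0) (𝓝 0)

lemma ae_isLebesguePoint [NormedSpace ℝ V] [FiniteDimensional ℝ V] [BorelSpace V] {μ : Measure V}
    [IsLocallyFiniteMeasure μ] {f : V → E} (hf : LocallyIntegrable f μ) :
    ∀ᵐ x ∂μ, IsLebesguePoint μ f x := by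
  filter_upwards [(Besicovitch.vitaliFamily μ).ae_tendsto_lintegral_enorm_sub_div hf] with x hx
  exact hx.comp (Besicovitch.tendsto_filterAt μ x)

end LebesguePoint

section WeightedIntegrability

variable {E : Type*} [NormedAddCommGroup E] [NormedSpace ℝ E]

lemma locallyIntegrable_of_integrable_smul {X : Type*} [TopologicalSpace X] [T2Space X]
    [LocallyCompactSpace X] [MeasurableSpace X] [OpensMeasurableSpace X] {μ : Measure X} {k : X → ℝ}
    (hk : Continuous k) (hk0 : ∀ z, k z ≠ 0) {f : X → E}
    (hf : Integrable (fun z => k z • f z) μ) : LocallyIntegrable f μ := by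
  simpa [smul_smul, hk0] using hf.locallyIntegrable.continuous_smul (hk.inv₀ hk0)

lemma integrable_smul_of_norm_le_const_mul {α : Type*} [MeasurableSpace α] {μ : Measure α}
    {k k' : α → ℝ} (hk : Measurable k) (hk' : Measurable k') (hk0 : ∀ z, k z ≠ 0) {C : ℝ}
    (hle : ∀ z, ‖k' z‖ ≤ C * ‖k z‖) {f : α → E} (hf : Integrable (fun z => k z • f z) μ) :
    Integrable (fun z => k' z • f z) μ := by
  have hbound (z : α) : ‖k' z / k z‖ ≤ C := by
    rw [norm_div, div_le_iff₀ (norm_pos_iff.2 (hk0 z))]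
    exact hle z
  refine (hf.bdd_smul C (hk'.div hk).aestronglyMeasurable (ae_of_all _ hbound)).congr
    (ae_of_all _ fun z => ?_)
  simp [smul_smul, hk0]

variable {V : Type*} [NormedAddCommGroup V] [MeasurableSpace V] [OpensMeasurableSpace V]

lemma integrable_exp_neg_mul_norm_sub_sq_smul {μ : Measure V} {b c : ℝ} (hcb : 2 * |c| ≤ b)
    {f : V → E} (hf : Integrable (fun z => rexp (-c * ‖z‖ ^ 2) • f z) μ) (x : V) :
    Integrable (fun z => rexp (-b * ‖z - x‖ ^ 2) • f z) μ := by
  refine integrable_smul_of_norm_le_const_mul (Continuous.measurable (by fun_prop))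
    (Continuous.measurable (by fun_prop)) (fun z => (Real.exp_pos _).ne')
    (C := rexp (2 * |c| * ‖x‖ ^ 2)) (fun z => ?_) hf
  rw [Real.norm_of_nonneg (Real.exp_pos _).le, Real.norm_of_nonneg (Real.exp_pos _).le,
    ← Real.exp_add, Real.exp_le_exp]
  have h := norm_sub_sq_le_two_mul z x 0
  rw [sub_zero, sub_zero] at h
  nlinarith [mul_le_mul_of_nonneg_left h (abs_nonneg c),
    mul_le_mul_of_nonneg_right (le_abs_self c) (sq_nonneg ‖z‖),
    mul_le_mul_of_nonneg_right hcb (sq_nonneg ‖z - x‖)]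

lemma integrable_gaussianKernel_smul [NormedSpace ℝ V] {μ : Measure V} {a b s : ℝ} (hs : 0 < s)
    (hbs : b * (2 * s) ≤ 1) {w x : V} (hw : ‖w - x‖ ≤ a * √s) {f : V → E}
    (hf : Integrable (fun z => rexp (-b * ‖z - x‖ ^ 2) • f z) μ) :
    Integrable (fun z => gaussianKernel s w z • f z) μ := by
  refine integrable_smul_of_norm_le_const_mul (Continuous.measurable (by fun_prop))
    (Continuous.measurable (by fun_prop)) (fun z => (Real.exp_pos _).ne')
    (C := rexp (a ^ 2) * 2 ^ ((Module.finrank ℝ V : ℝ) / 2) *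
      (π * (2 * s)) ^ (-(Module.finrank ℝ V : ℝ) / 2)) (fun z => ?_) hf
  have hcentred : gaussianKernel (2 * s) x z ≤
      (π * (2 * s)) ^ (-(Module.finrank ℝ V : ℝ) / 2) * rexp (-b * ‖z - x‖ ^ 2) := by
    simpa only [zero_pow two_ne_zero, neg_zero, zero_mul, Real.exp_zero, mul_one] using
      gaussianKernel_le_mul_exp_neg_mul (by positivity) hbs le_rfl (norm_nonneg (z - x))
  rw [Real.norm_of_nonneg (gaussianKernel_nonneg hs.le w z),
    Real.norm_of_nonneg (Real.exp_pos _).le, mul_assoc]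
  refine (gaussianKernel_le_mul_gaussianKernel_two_mul hs hw z).trans ?_
  gcongr

end WeightedIntegrability

section NontangentialConvergence

variable {V E : Type*} [NormedAddCommGroup V] [InnerProductSpace ℝ V] [FiniteDimensional ℝ V]
  [MeasurableSpace V] [BorelSpace V] [NormedAddCommGroup E] [NormedSpace ℝ E]

lemma IsLebesguePoint.tendsto_lintegral_gaussianKernel_mul_enorm_sub {b : ℝ} (hb : 0 < b) {x : V}
    {f : V → E} (hx : IsLebesguePoint volume f x)
    (hf : Integrable fun z => rexp (-b * ‖z - x‖ ^ 2) • f z) :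
    Tendsto (fun s => ∫⁻ z, ENNReal.ofReal (gaussianKernel s x z) * ‖f z - f x‖ₑ)
      (𝓝[>] 0) (𝓝 0) := by
  have hfm : AEStronglyMeasurable f :=
    (locallyIntegrable_of_integrable_smul (by fun_prop) (fun z => (Real.exp_pos _).ne')
      hf).aestronglyMeasurable
  have hosc : AEMeasurable fun z => ‖f z - f x‖ₑ := (hfm.sub aestronglyMeasurable_const).enorm
  have hdensity {k : V → ℝ} (hk : Continuous k) :
      ∫⁻ z, ENNReal.ofReal (k z) ∂(volume.withDensity fun z => ‖f z - f x‖ₑ) =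
        ∫⁻ z, ENNReal.ofReal (k z) * ‖f z - f x‖ₑ := by
    rw [lintegral_withDensity_eq_lintegral_mul₀ hosc (by fun_prop)]
    simp only [Pi.mul_apply, mul_comm]
  have hfinite : Integrable fun z => rexp (-b * ‖z - x‖ ^ 2) • (f z - f x) := by
    simp only [smul_sub]
    exact hf.sub ((integrable_exp_neg_mul_norm_sub_sq hb x).smul_const (f x))
  have h := tendsto_lintegral_gaussianKernel_nhds_zero (b := b)
    (ν := volume.withDensity fun z => ‖f z - f x‖ₑ) (x := x) (by
      rw [hdensity (by fun_prop)]
      simpa only [enorm_smul, Real.enorm_of_nonneg (Real.exp_pos _).le] using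
        hfinite.hasFiniteIntegral.ne)
    (by simpa only [IsLebesguePoint, withDensity_apply _ measurableSet_closedBall] using hx)
  simpa only [hdensity (continuous_gaussianKernel _ x)] using h

variable [CompleteSpace E]

lemma enorm_integral_gaussianKernel_smul_sub_le {a s : ℝ} (hs : 0 < s) {w x : V}
    (hw : ‖w - x‖ ≤ a * √s) {f : V → E} (hf : Integrable fun z => gaussianKernel s w z • f z)
    (c : E) :
    ‖(∫ z, gaussianKernel s w z • f z) - c‖ₑ ≤
      ENNReal.ofReal (rexp (a ^ 2) * 2 ^ ((Module.finrank ℝ V : ℝ) / 2)) *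
        ∫⁻ z, ENNReal.ofReal (gaussianKernel (2 * s) x z) * ‖f z - c‖ₑ := by
  have hc : ∫ z, gaussianKernel s w z • c = c := by
    rw [integral_smul_const, integral_gaussianKernel hs, one_smul]
  calc ‖(∫ z, gaussianKernel s w z • f z) - c‖ₑ
      = ‖∫ z, gaussianKernel s w z • (f z - c)‖ₑ := by
        simp only [smul_sub]
        rw [integral_sub hf ((integrable_gaussianKernel hs w).smul_const c), hc]
    _ ≤ ∫⁻ z, ‖gaussianKernel s w z • (f z - c)‖ₑ := enorm_integral_le_lintegral_enorm _
    _ ≤ ∫⁻ z, ENNReal.ofReal (rexp (a ^ 2) * 2 ^ ((Module.finrank ℝ V : ℝ) / 2)) *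
          (ENNReal.ofReal (gaussianKernel (2 * s) x z) * ‖f z - c‖ₑ) := by
        refine lintegral_mono fun z => ?_
        rw [enorm_smul, Real.enorm_of_nonneg (gaussianKernel_nonneg hs.le w z), ← mul_assoc,
          ← ENNReal.ofReal_mul (by positivity)]
        gcongr
        exact gaussianKernel_le_mul_gaussianKernel_two_mul hs hw z
    _ = _ := lintegral_const_mul' _ _ ENNReal.ofReal_ne_top

theorem IsLebesguePoint.tendsto_integral_gaussianKernel_smul {b : ℝ} (hb : 0 < b) {x : V}
    {f : V → E} (hx : IsLebesguePoint volume f x)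
    (hf : Integrable fun z => rexp (-b * ‖z - x‖ ^ 2) • f z) (a : ℝ) :
    Tendsto (fun p : V × ℝ => ∫ z, gaussianKernel p.2 p.1 z • f z) (parabolicNhds a x)
      (𝓝 (f x)) := by
  have hdouble : Tendsto (fun p : V × ℝ => 2 * p.2) (parabolicNhds a x) (𝓝[>] 0) := by
    simpa using TendstoNhdsWithinIoi.const_mul two_pos tendsto_snd_parabolicNhds
  have hsmall : ∀ᶠ p in parabolicNhds a x, 2 * p.2 ≤ b⁻¹ :=
    (hdouble.mono_right nhdsWithin_le_nhds).eventually_le_const (inv_pos.2 hb)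
  have hlim := ENNReal.Tendsto.const_mul
    ((hx.tendsto_lintegral_gaussianKernel_mul_enorm_sub hb hf).comp hdouble)
    (.inr (ENNReal.ofReal_ne_top (r := rexp (a ^ 2) * 2 ^ ((Module.finrank ℝ V : ℝ) / 2))))
  rw [mul_zero] at hlim
  refine tendsto_iff_edist_tendsto_0.2 (tendsto_of_tendsto_of_tendsto_of_le_of_le'
    tendsto_const_nhds hlim (Eventually.of_forall fun _ => zero_le) ?_)
  filter_upwards [eventually_parabolicNhds, hsmall] with p ⟨hp, hpx⟩ hpb
  rw [edist_eq_enorm_sub]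
  exact enorm_integral_gaussianKernel_smul_sub_le hp hpx
    (integrable_gaussianKernel_smul hp ((le_inv_mul_iff₀ hb).1 (by simpa using hpb)) hpx hf) _

theorem ae_tendsto_integral_gaussianKernel_smul {c : ℝ} {f : V → E}
    (hf : Integrable fun z => rexp (-c * ‖z‖ ^ 2) • f z) :
    ∀ᵐ x, ∀ a, Tendsto (fun p : V × ℝ => ∫ z, gaussianKernel p.2 p.1 z • f z) (parabolicNhds a x)
      (𝓝 (f x)) := by
  have hloc := locallyIntegrable_of_integrable_smul (by fun_prop) (fun z => (Real.exp_pos _).ne') hf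
  filter_upwards [ae_isLebesguePoint hloc] with x hx
  exact hx.tendsto_integral_gaussianKernel_smul (b := 2 * |c| + 1) (by positivity)
    (integrable_exp_neg_mul_norm_sub_sq_smul (by linarith) hf x)

end NontangentialConvergence

section OrnsteinUhlenbeck

variable {d : ℕ} {f : EuclideanSpace ℝ (Fin d) → ℝ}

lemma integrable_gaussianMeasure_iff :
    Integrable f (gaussianMeasure d) ↔ Integrable fun z => rexp (-‖z‖ ^ 2) * f z := by
  rw [gaussianMeasure, integrable_withDensity_iff_integrable_smul' (by fun_prop)
      (ae_of_all _ fun z => ENNReal.ofReal_lt_top),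
    ← integrable_const_mul_iff (c := π ^ (-(d : ℝ) / 2)) (IsUnit.mk0 _ (by positivity))
      fun z => rexp (-‖z‖ ^ 2) * f z]
  refine integrable_congr (ae_of_all _ fun z => ?_)
  dsimp only
  rw [ENNReal.toReal_ofReal (by positivity), smul_eq_mul, mul_assoc]

lemma ouSemigroup_eq_integral_gaussianKernel {t : ℝ} (ht : 0 ≤ t) (y : EuclideanSpace ℝ (Fin d)) :
    ouSemigroup t f y = ∫ z, gaussianKernel (1 - rexp (-2 * t)) (rexp (-t) • y) z • f z := by
  have hs : 0 ≤ 1 - rexp (-2 * t) := sub_nonneg.2 (Real.exp_le_one_iff.2 (by linarith))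
  simp only [gaussianKernel, smul_eq_mul, mul_assoc]
  rw [integral_const_mul, finrank_euclideanSpace_fin, Real.mul_rpow pi_pos.le hs, ouSemigroup,
    mul_assoc]

lemma principal_parabolicCone_le_parabolicNhds (x : EuclideanSpace ℝ (Fin d)) :
    𝓝 (x, (0 : ℝ)) ⊓ 𝓟 (parabolicCone x) ≤ parabolicNhds 1 x := by
  refine inf_le_inf_left _ (principal_mono.2 fun p hp => ⟨hp.1, ?_⟩)
  rw [one_mul]
  exact (hp.2.trans_le ((min_le_left _ _).trans (min_le_left _ _))).le

theorem ou_nontangential_convergence_general {c : ℝ}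
    (hf : Integrable fun z => rexp (-c * ‖z‖ ^ 2) * f z) :
    ∀ᵐ x, ∀ a, Tendsto (fun p : EuclideanSpace ℝ (Fin d) × ℝ => ouSemigroup p.2 f p.1)
      (parabolicNhds a x) (𝓝 (f x)) := by
  filter_upwards [ae_tendsto_integral_gaussianKernel_smul hf] with x hx a
  refine ((hx (a + ‖x‖)).comp tendsto_exp_neg_smul_parabolicNhds).congr' ?_
  filter_upwards [eventually_parabolicNhds] with p hp
  exact (ouSemigroup_eq_integral_gaussianKernel hp.1.le p.1).symm

end OrnsteinUhlenbeck

/-- Non-tangential a.e. convergence of the Ornstein-Uhlenbeck semigroup: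
for every `f ∈ L¹(γ_d)` and a.e. `x`, `T_t f(y) → f(x)` as `(y,t) → (x,0)` within
the parabolic gaussian cone `Γ^p_γ(x)`. -/
theorem ou_nontangential_convergence {d : ℕ} (f : EuclideanSpace ℝ (Fin d) → ℝ)
    (hf : Integrable f (gaussianMeasure d)) :
    ∀ᵐ x ∂(gaussianMeasure d),
      Tendsto (fun p : (EuclideanSpace ℝ (Fin d)) × ℝ => ouSemigroup p.2 f p.1)
        (𝓝 (x, (0:ℝ)) ⊓ Filter.principal (parabolicCone x)) (𝓝 (f x)) := by
  filter_upwards [(withDensity_absolutelyContinuous _ _).ae_le (ou_nontangential_convergence_general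
    (c := 1) (by simpa only [neg_one_mul] using integrable_gaussianMeasure_iff.1 hf))] with x hx
  exact (hx 1).mono_left (principal_parabolicCone_le_parabolicNhds x)
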